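/- There exists ε ∈ (0,1) such that for every even n ≥ 2 the following holds for the Pauli agreement game: let P(f,g) be the probability—where w is chosen uniformly from L^n_1 and then (x,y) is chosen uniformly among pairs of maximal isotropic subspaces with w ⊆ x and w ⊆ y—that the outcomes f_x and g_y agree on the nonzero vector of w. Then the maximum of P(f,g) over all pairs of outcome families (f_x)_{x∈L^n_n}, (g_x)_{x∈L^n_n} lies between 1/2 and 1/2 + ε^n. -/

import Mathlib

open Finset

abbrev F2 := ZMod 2
/-- `F2^{2n}`, split into the first and last `n` coordinates. -/
abbrev PV (n : ℕ) := (Fin n → F2) × (Fin n → F2)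

/-- Symplectic product on `F2^{2n}`: zero iff `a₁·b₂ = a₂·b₁`. -/
def symp {n : ℕ} (a b : PV n) : F2 :=
  (∑ i, a.1 i * b.2 i) + (∑ i, a.2 i * b.1 i)

/-- A subspace is isotropic if the symplectic product vanishes on it. -/
def IsIsotropic {n : ℕ} (S : Submodule F2 (PV n)) : Prop :=
  ∀ x ∈ S, ∀ y ∈ S, symp x y = 0

/-- `Lset n k` = `L^n_k`, the set of `k`-dimensional isotropic subspaces of `F2^{2n}`. -/
def Lset (n k : ℕ) : Set (Submodule F2 (PV n)) :=
  {S | IsIsotropic S ∧ Module.finrank F2 S = k}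

/-- Integer lift of a vector over `F2`, with values in `{0,1} ⊆ ℤ`. -/
def liftZ {n : ℕ} (v : Fin n → F2) : Fin n → ℤ := fun i => ((v i).val : ℤ)

def dotZ {n : ℕ} (a b : Fin n → ℤ) : ℤ := ∑ i, a i * b i

/-- The phase `i^{x̂₁·x̂₂} · i^{ŷ₁·ŷ₂} · i^{−((x+y)^^₁·(x+y)^^₂)} · (−1)^{x̂₂·ŷ₁}`. -/
noncomputable def phase {n : ℕ} (x y : PV n) : ℂ :=
  Complex.I ^ (dotZ (liftZ x.1) (liftZ x.2)) *
  Complex.I ^ (dotZ (liftZ y.1) (liftZ y.2)) *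
  Complex.I ^ (-(dotZ (liftZ (x + y).1) (liftZ (x + y).2))) *
  (-1 : ℂ) ^ (dotZ (liftZ x.2) (liftZ y.1))

/-- `w(x,y) ∈ {0,1} ⊆ F2`: zero iff the phase equals `1`. -/
noncomputable def wght {n : ℕ} (x y : PV n) : F2 :=
  if phase x y = 1 then 0 else 1

/-- An outcome of an isotropic subspace `S` is `f : S → F2` with
`f(x+y) = f(x)+f(y)+w(x,y)`. -/
def IsOutcome {n : ℕ} (S : Submodule F2 (PV n)) (f : S → F2) : Prop :=
  ∀ x y : S, f (x + y) = f x + f y + wght (x : PV n) (y : PV n)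

/-- Two outcomes are consistent if they agree on the intersection of their domains. -/
def ConsistentOn {n : ℕ} {S₁ S₂ : Submodule F2 (PV n)} (f₁ : S₁ → F2) (f₂ : S₂ → F2) : Prop :=
  ∀ v (h1 : v ∈ S₁) (h2 : v ∈ S₂), f₁ ⟨v, h1⟩ = f₂ ⟨v, h2⟩

/-- Ordered pairs of maximal isotropic subspaces both containing `w`. -/
def questionPairs (n : ℕ) (w : Submodule F2 (PV n)) :
    Set (Submodule F2 (PV n) × Submodule F2 (PV n)) :=
  {p | p.1 ∈ Lset n n ∧ p.2 ∈ Lset n n ∧ w ≤ p.1 ∧ w ≤ p.2}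

/-- Pairs on which the two players' outcomes agree on the nonzero vector of `w`. -/
def agreePairs (n : ℕ) (f g : (S : Submodule F2 (PV n)) → (S → F2))
    (w : Submodule F2 (PV n)) :
    Set (Submodule F2 (PV n) × Submodule F2 (PV n)) :=
  {p | p.1 ∈ Lset n n ∧ p.2 ∈ Lset n n ∧
    ∃ (h1 : w ≤ p.1) (h2 : w ≤ p.2), ∃ v, ∃ (hv : v ∈ w), v ≠ 0 ∧
      f p.1 ⟨v, h1 hv⟩ = g p.2 ⟨v, h2 hv⟩}

/-- The winning probability `P(f,g)` in the Pauli agreement game `𝒢_n`: `w` is drawn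
uniformly from `L^n_1`, then `(x,y)` uniformly among pairs of maximal isotropic subspaces
containing `w`; the players win if their outcomes agree on the nonzero vector of `w`. -/
noncomputable def agreeProb (n : ℕ) (f g : (S : Submodule F2 (PV n)) → (S → F2)) : ℝ :=
  (1 / (Nat.card (Lset n 1) : ℝ)) *
    ∑ᶠ w ∈ Lset n 1,
      (Nat.card (agreePairs n f g w) : ℝ) / (Nat.card (questionPairs n w) : ℝ)

/-! ### Phases and the cocycle -/

def qf {n : ℕ} (x : PV n) : ZMod 4 := ∑ i, (((x.1 i).val * (x.2 i).val : ℕ) : ZMod 4)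
def bet {n : ℕ} (x y : PV n) : F2 := ∑ i, x.2 i * y.1 i
def dbl (a : F2) : ZMod 4 := ((2 * a.val : ℕ) : ZMod 4)

lemma dbl_add : ∀ a b : F2, dbl (a + b) = dbl a + dbl b := by decide
lemma dbl_inj : ∀ a b : F2, dbl a = dbl b → a = b := by decide
lemma dbl_sum {ι : Type*} (s : Finset ι) (g : ι → F2) : dbl (∑ i ∈ s, g i) = ∑ i ∈ s, dbl (g i) := by
  classical
  induction s using Finset.induction_on with
  | empty => simp [dbl]
  | insert a s ha ih => rw [Finset.sum_insert ha, Finset.sum_insert ha, dbl_add, ih]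

lemma f2_add_self (a : F2) : a + a = 0 := by revert a; decide
lemma f2_cases (a : F2) : a = 0 ∨ a = 1 := by revert a; decide

lemma bet_add_left {n : ℕ} (x y z : PV n) : bet (x + y) z = bet x z + bet y z := by
  simp [bet, add_mul, Finset.sum_add_distrib]
lemma bet_add_right {n : ℕ} (x y z : PV n) : bet x (y + z) = bet x y + bet x z := by
  simp [bet, mul_add, Finset.sum_add_distrib]
lemma symp_eq_bet {n : ℕ} (x y : PV n) : symp x y = bet x y + bet y x := by
  simp only [symp, bet]; rw [add_comm]; congr 1
  exact Finset.sum_congr rfl fun i _ => mul_comm _ _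
lemma symp_add_left {n : ℕ} (x y z : PV n) : symp (x + y) z = symp x z + symp y z := by
  simp only [symp_eq_bet, bet_add_left, bet_add_right]; ring
lemma symp_add_right {n : ℕ} (x y z : PV n) : symp x (y + z) = symp x y + symp x z := by
  simp only [symp_eq_bet, bet_add_left, bet_add_right]; ring
lemma symp_self {n : ℕ} (x : PV n) : symp x x = 0 := by
  rw [symp_eq_bet, f2_add_self]
lemma symp_comm {n : ℕ} (x y : PV n) : symp x y = symp y x := by
  rw [symp_eq_bet, symp_eq_bet, add_comm]
lemma symp_smul_left {n : ℕ} (c : F2) (x z : PV n) : symp (c • x) z = c * symp x z := by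
  simp only [symp, mul_add, Finset.mul_sum]; simp [mul_assoc]
lemma symp_zero_left {n : ℕ} (x : PV n) : symp 0 x = 0 := by simp [symp]
lemma pv_add_self {n : ℕ} (x : PV n) : x + x = 0 := by
  ext i <;> exact f2_add_self _

lemma I_zpow_eq_one (D : ℤ) : Complex.I ^ D = 1 ↔ ((D : ℤ) : ZMod 4) = 0 := by
  rw [ZMod.intCast_zmod_eq_zero_iff_dvd]
  exact (Complex.isPrimitiveRoot_I).zpow_eq_one_iff_dvd D

lemma phase_eq {n : ℕ} (x y : PV n) : phase x y = Complex.I ^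
    (dotZ (liftZ x.1) (liftZ x.2) + dotZ (liftZ y.1) (liftZ y.2)
      + -(dotZ (liftZ (x + y).1) (liftZ (x + y).2)) + 2 * dotZ (liftZ x.2) (liftZ y.1)) := by
  have hI := Complex.I_ne_zero
  rw [zpow_add₀ hI, zpow_add₀ hI, zpow_add₀ hI, zpow_mul]
  simp [phase]

lemma dotZ_cast {n : ℕ} (x : PV n) : ((dotZ (liftZ x.1) (liftZ x.2) : ℤ) : ZMod 4) = qf x := by
  simp [dotZ, liftZ, qf]

lemma dotZ_cast2 {n : ℕ} (x y : PV n) :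
    ((2 * dotZ (liftZ x.2) (liftZ y.1) : ℤ) : ZMod 4) = dbl (bet x y) := by
  rw [bet, dbl_sum]
  simp only [dotZ, liftZ, Finset.mul_sum]
  push_cast
  refine Finset.sum_congr rfl fun i _ => ?_
  generalize x.2 i = a
  generalize y.1 i = b
  revert a b; decide

/-- exponent in `ZMod 4` -/
def om {n : ℕ} (x y : PV n) : ZMod 4 := qf x + qf y - qf (x + y) + dbl (bet x y)

lemma wght_eq {n : ℕ} (x y : PV n) : wght x y = if om x y = 0 then 0 else 1 := by
  have : phase x y = 1 ↔ om x y = 0 := by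
    rw [phase_eq, I_zpow_eq_one]
    have h := dotZ_cast2 x y
    push_cast at h ⊢
    rw [h, dotZ_cast, dotZ_cast, dotZ_cast, om, sub_eq_add_neg]
  simp only [wght, this]

def red : ZMod 4 →+* F2 := ZMod.castHom (by norm_num) F2

lemma red_qf {n : ℕ} (x : PV n) : red (qf x) = bet x x := by
  simp only [qf, bet, map_sum]
  refine Finset.sum_congr rfl fun i _ => ?_
  generalize x.1 i = a
  generalize x.2 i = b
  revert a b; decide

lemma dbl_red : ∀ a : ZMod 4, dbl (red a) = a + a := by decide

lemma red_dbl : ∀ a : F2, red (dbl a) = 0 := by decide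

lemma red_om {n : ℕ} (x y : PV n) : red (om x y) = symp x y := by
  simp only [om, map_add, map_sub, red_qf, red_dbl, bet_add_left, bet_add_right, symp_eq_bet]
  generalize bet x x = a
  generalize bet y y = b
  generalize bet x y = c
  generalize bet y x = d
  revert a b c d; decide

lemma dbl_wght {n : ℕ} (x y : PV n) (h : symp x y = 0) : dbl (wght x y) = om x y := by
  rw [wght_eq]
  have := red_om x y
  rw [h] at this
  generalize om x y = a at *
  revert a; decide

/-! ### Existence of outcomes -/

structure ExtT (S : Type*) where
  a : S
  t : F2

lemma exists_split {S : Type*} [AddCommGroup S] [Module F2 S] (w : S → S → F2)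
    (hs : ∀ x y, w x y = w y x) (hc : ∀ x y z, w x y + w (x + y) z = w y z + w x (y + z))
    (h0 : ∀ x, w 0 x = 0) (hx : ∀ x, w x x = 0) :
    ∃ f : S → F2, ∀ x y, f (x + y) = f x + f y + w x y := by
  have hself : ∀ x : S, x + x = 0 := fun x => by
    have : (2 : F2) • x = 0 := by rw [show (2 : F2) = 0 from rfl, zero_smul]
    rwa [two_smul] at this
  let _ : Add (ExtT S) := ⟨fun p q => ⟨p.a + q.a, p.t + q.t + w p.a q.a⟩⟩
  let _ : Zero (ExtT S) := ⟨⟨0, 0⟩⟩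
  let _ : Neg (ExtT S) := ⟨fun p => p⟩
  have hadd : ∀ p q : ExtT S, p + q = ⟨p.a + q.a, p.t + q.t + w p.a q.a⟩ := fun _ _ => rfl
  have hzero : (0 : ExtT S) = ⟨0, 0⟩ := rfl
  have hcomm : ∀ p q : ExtT S, p + q = q + p := fun p q => by
    rw [hadd, hadd, hs, add_comm p.a, add_comm p.t]
  have hz : ∀ p : ExtT S, 0 + p = p := fun p => by
    rw [hadd, hzero]; simp [h0]
  have hd : ∀ p : ExtT S, p + p = 0 := fun p => by
    rw [hadd, hzero]; simp [hx, hself, f2_add_self]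
  let _ : AddCommGroup (ExtT S) :=
    { add_assoc := fun p q r => by
        simp only [hadd, ExtT.mk.injEq]
        refine ⟨add_assoc _ _ _, ?_⟩
        have := hc p.a q.a r.a
        linear_combination this
      zero_add := hz
      add_zero := fun p => by rw [hcomm, hz]
      nsmul := nsmulRec
      zsmul := zsmulRec
      neg_add_cancel := hd
      add_comm := hcomm }
  let _ : Module F2 (ExtT S) := AddCommGroup.zmodModule (n := 2) (fun p => by
    rw [two_nsmul]; exact hd p)
  let π : ExtT S →+ S := { toFun := ExtT.a, map_zero' := rfl, map_add' := fun _ _ => rfl }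
  let πl : ExtT S →ₗ[F2] S := π.toZModLinearMap 2
  have hsurj : Function.Surjective πl := fun x => ⟨⟨x, 0⟩, rfl⟩
  obtain ⟨s, hsr⟩ := πl.exists_rightInverse_of_surjective (LinearMap.range_eq_top.2 hsurj)
  have hsa : ∀ x, (s x).a = x := fun x => LinearMap.congr_fun hsr x
  refine ⟨fun x => (s x).t, fun x y => ?_⟩
  have := congrArg ExtT.t (map_add s x y)
  rw [hadd, hsa, hsa] at this
  exact this

lemma qf_zero {n : ℕ} : qf (0 : PV n) = 0 := by simp [qf]

lemma exists_outcome {n : ℕ} (S : Submodule F2 (PV n)) (hS : IsIsotropic S) :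
    ∃ f : S → F2, IsOutcome S f := by
  have key : ∀ x y : S, dbl (wght (x : PV n) (y : PV n)) = om (x : PV n) y := fun x y =>
    dbl_wght _ _ (hS _ x.2 _ y.2)
  have hb : ∀ x y : S, bet (x : PV n) y = bet (y : PV n) x := fun x y => by
    have := hS _ x.2 _ y.2
    rw [symp_eq_bet] at this
    generalize bet (x : PV n) y = a at *
    generalize bet (y : PV n) x = b at *
    revert a b; decide
  refine exists_split (S := S) (fun x y => wght (x : PV n) (y : PV n)) ?_ ?_ ?_ ?_
  · intro x y; apply dbl_inj; rw [key, key, om, om, hb, add_comm (y : PV n)]; ring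
  · intro x y z; apply dbl_inj; rw [dbl_add, dbl_add, key, key, key, key]
    simp only [om, Submodule.coe_add, bet_add_left, bet_add_right, dbl_add, add_assoc]; ring
  · intro x; apply dbl_inj; rw [key]; simp [om, qf_zero, bet, dbl]
  · intro x; apply dbl_inj; rw [key]; simp only [om, pv_add_self, qf_zero]
    rw [← red_qf, dbl_red]
    generalize qf (x : PV n) = a
    revert a; decide

lemma magic {n : ℕ} (A B C D : PV n) (hAB : symp A B = 0) (hAC : symp A C = 0)
    (hBD : symp B D = 0) (hCD : symp C D = 0) (hAD : symp A D = 1) (hBC : symp B C = 1) :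
    wght A B + wght C D + wght (A + C) (B + D)
      + (wght A C + wght B D + wght (A + B) (C + D)) = 1 := by
  have h1 : symp (A + C) (B + D) = 0 := by
    rw [symp_add_left, symp_add_right, symp_add_right, hAB, hAD, symp_comm C B, hBC, hCD]; decide
  have h2 : symp (A + B) (C + D) = 0 := by
    rw [symp_add_left, symp_add_right, symp_add_right, hAC, hAD, hBC, hBD]; decide
  apply dbl_inj
  simp only [dbl_add]
  rw [dbl_wght _ _ hAB, dbl_wght _ _ hAC, dbl_wght _ _ hBD, dbl_wght _ _ hCD, dbl_wght _ _ h1,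
    dbl_wght _ _ h2]
  simp only [om]
  rw [show A + C + (B + D) = A + B + (C + D) by abel]
  have e := dbl_red
  have q1 := dbl_red (qf A)
  have q2 := dbl_red (qf B)
  have q3 := dbl_red (qf C)
  have q4 := dbl_red (qf D)
  have q5 := dbl_red (qf (A + B + (C + D)))
  have key : dbl (bet A A) + dbl (bet B B) + dbl (bet C C) + dbl (bet D D)
      - dbl (bet (A + B + (C + D)) (A + B + (C + D))) + dbl (bet A B) + dbl (bet C D)
      + dbl (bet (A + C) (B + D)) + dbl (bet A C) + dbl (bet B D) + dbl (bet (A + B) (C + D))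
      = dbl 1 := by
    have hneg : ∀ a b : F2, dbl a - dbl b = dbl (a + b) := by decide
    rw [← dbl_add, ← dbl_add, ← dbl_add, hneg]
    simp only [← dbl_add]
    congr 1
    simp only [bet_add_left, bet_add_right]
    rw [symp_eq_bet] at hAB hAC hBD hCD hAD hBC
    have c2 : (2 : F2) = 0 := rfl
    linear_combination hAB + hAC + hBD + hCD + hAD + 2 * hBC + (bet A A + bet B B + bet C C + bet D D
      + bet A B + bet C D + bet A D + bet A C + bet B D + 1) * c2
  rw [red_qf] at q1 q2 q3 q4 q5
  rw [← key, q1, q2, q3, q4, q5]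
  ring

/-! ### The symplectic group -/

def sympForm (n : ℕ) : LinearMap.BilinForm F2 (PV n) :=
  LinearMap.mk₂ F2 symp symp_add_left symp_smul_left symp_add_right
    (fun c x y => by rw [symp_comm, symp_smul_left, symp_comm, smul_eq_mul])

lemma exists_symp_one {n : ℕ} (v : PV n) (hv : v ≠ 0) : ∃ z, symp v z = 1 := by
  by_contra hcon
  push Not at hcon
  have h0 : ∀ z, symp v z = 0 := fun z => (f2_cases _).resolve_right (hcon z)
  apply hv
  ext i
  · have := h0 (0, Pi.single i 1)
    simpa [symp, Pi.single_apply] using this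
  · have := h0 (Pi.single i 1, 0)
    simpa [symp, Pi.single_apply] using this

lemma sympForm_nondeg (n : ℕ) : (sympForm n).Nondegenerate := by
  have hl : (sympForm n).SeparatingLeft := by
    intro v hv
    by_contra h
    obtain ⟨z, hz⟩ := exists_symp_one v h
    have : symp v z = 0 := hv z
    rw [this] at hz; exact absurd hz (by decide)
  refine ⟨hl, ?_⟩
  intro v hv
  apply hl
  intro z
  have : symp z v = 0 := hv z
  change symp v z = 0
  rw [symp_comm]; exact this

lemma mem_of_orth {n : ℕ} {L : Submodule F2 (PV n)} (hL : L ∈ Lset n n) (v : PV n)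
    (hv : ∀ x ∈ L, symp x v = 0) : v ∈ L := by
  have hle : L ≤ (sympForm n).orthogonal L := fun x hx y hy => hL.1 y hy x hx
  have hfr := LinearMap.BilinForm.finrank_orthogonal (sympForm_nondeg n) L
  have : Module.finrank F2 (PV n) = n + n := by simp
  have heq : L = (sympForm n).orthogonal L :=
    Submodule.eq_of_le_of_finrank_eq hle (by rw [hfr, this, hL.2]; omega)
  rw [heq]
  exact fun x hx => hv x hx

def SpG (n : ℕ) : Subgroup (PV n ≃ₗ[F2] PV n) where
  carrier := {σ | ∀ x y, symp (σ x) (σ y) = symp x y}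
  mul_mem' := fun {a b} ha hb x y => by
    rw [LinearEquiv.mul_apply, LinearEquiv.mul_apply, ha, hb]
  one_mem' := fun x y => rfl
  inv_mem' := fun {a} ha x y => by
    have := ha (a⁻¹ x) (a⁻¹ y)
    rw [← this, ← LinearEquiv.mul_apply, ← LinearEquiv.mul_apply, mul_inv_cancel]
    rfl

def transv {n : ℕ} (a : PV n) : PV n ≃ₗ[F2] PV n :=
  LinearEquiv.ofInvolutive
    { toFun := fun x => x + symp x a • a
      map_add' := fun x y => by rw [symp_add_left, add_smul]; abel
      map_smul' := fun c x => by
        rw [symp_smul_left, RingHom.id_apply, smul_add, mul_smul] }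
    (fun x => by
      change (x + symp x a • a) + symp (x + symp x a • a) a • a = x
      rw [symp_add_left, symp_smul_left, symp_self, mul_zero, add_zero, add_assoc, pv_add_self,
        add_zero])

lemma transv_apply {n : ℕ} (a x : PV n) : transv a x = x + symp x a • a := rfl

lemma transv_mem {n : ℕ} (a : PV n) : transv a ∈ SpG n := by
  intro x y
  rw [transv_apply, transv_apply, symp_add_left, symp_add_right, symp_add_right, symp_smul_left,
    symp_smul_left, symp_comm x (symp y a • a), symp_smul_left, symp_comm a (symp y a • a),
    symp_smul_left, symp_self, symp_comm a y, symp_comm a x]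
  generalize symp x y = p
  generalize symp x a = q
  generalize symp y a = r
  revert p q r; decide

lemma transv_swap {n : ℕ} (u v : PV n) (h : symp u v = 1) : transv (u + v) u = v := by
  rw [transv_apply, symp_add_right, symp_self, h, zero_add, one_smul, ← add_assoc, pv_add_self,
    zero_add]

lemma trans_vec {n : ℕ} (u v : PV n) (hu : u ≠ 0) (hv : v ≠ 0) : ∃ σ ∈ SpG n, σ u = v := by
  rcases f2_cases (symp u v) with h | h
  swap
  · exact ⟨_, transv_mem (u + v), transv_swap u v h⟩
  have : ∃ z, symp u z = 1 ∧ symp v z = 1 := by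
    obtain ⟨z1, h1⟩ := exists_symp_one u hu
    obtain ⟨z2, h2⟩ := exists_symp_one v hv
    rcases f2_cases (symp v z1) with h3 | h3
    swap
    · exact ⟨z1, h1, h3⟩
    rcases f2_cases (symp u z2) with h4 | h4
    swap
    · exact ⟨z2, h4, h2⟩
    exact ⟨z1 + z2, by rw [symp_add_right, h1, h4, add_zero],
      by rw [symp_add_right, h2, h3, zero_add]⟩
  obtain ⟨z, h1, h2⟩ := this
  refine ⟨transv (z + v) * transv (u + z), mul_mem (transv_mem _) (transv_mem _), ?_⟩
  rw [LinearEquiv.mul_apply, transv_swap u z h1, transv_swap z v (by rw [symp_comm, h2])]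

def actS {n : ℕ} (σ : PV n ≃ₗ[F2] PV n) (S : Submodule F2 (PV n)) : Submodule F2 (PV n) :=
  S.map (σ : PV n →ₗ[F2] PV n)

lemma mem_actS {n : ℕ} (σ : PV n ≃ₗ[F2] PV n) (S : Submodule F2 (PV n)) (v : PV n) :
    σ v ∈ actS σ S ↔ v ∈ S := by
  simp [actS]

lemma actS_mul {n : ℕ} (σ τ : PV n ≃ₗ[F2] PV n) (S : Submodule F2 (PV n)) :
    actS (σ * τ) S = actS σ (actS τ S) := by
  rw [actS, actS, actS, ← Submodule.map_comp]; rfl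

lemma actS_one {n : ℕ} (S : Submodule F2 (PV n)) : actS 1 S = S := by
  ext x; simp [actS]

lemma actS_lag {n : ℕ} (σ : PV n ≃ₗ[F2] PV n) (hσ : σ ∈ SpG n) (S : Submodule F2 (PV n))
    (hS : S ∈ Lset n n) : actS σ S ∈ Lset n n := by
  refine ⟨?_, ?_⟩
  · rintro _ ⟨x, hx, rfl⟩ _ ⟨y, hy, rfl⟩
    exact (hσ x y).trans (hS.1 x hx y hy)
  · rw [actS, LinearEquiv.finrank_map_eq]; exact hS.2

lemma trans_lag {n : ℕ} (L L' : Submodule F2 (PV n)) (hL : L ∈ Lset n n) (hL' : L' ∈ Lset n n) :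
    ∃ σ ∈ SpG n, actS σ L = L' ∧ ∀ z ∈ L ⊓ L', σ z = z := by
  obtain ⟨k, hk⟩ : ∃ k, n - Module.finrank F2 (L ⊓ L' : Submodule F2 (PV n)) = k := ⟨_, rfl⟩
  induction k using Nat.strong_induction_on generalizing L with
  | _ k ih =>
  by_cases hLL : L ≤ L'
  · refine ⟨1, one_mem _, ?_, fun _ _ => rfl⟩
    rw [actS_one]
    exact Submodule.eq_of_le_of_finrank_eq hLL (by rw [hL.2, hL'.2])
  obtain ⟨l, hl, hl'⟩ := Set.not_subset.1 hLL
  have : ∃ y ∈ L', symp y l = 1 := by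
    by_contra hcon
    push Not at hcon
    exact hl' (mem_of_orth hL' l fun x hx => (f2_cases _).resolve_right (hcon x hx))
  obtain ⟨y, hy, hyl⟩ := this
  have hly : symp l y = 1 := by rw [symp_comm, hyl]
  set t := transv (l + y) with ht
  have htG : t ∈ SpG n := transv_mem _
  have hfix : ∀ z ∈ L ⊓ L', t z = z := by
    intro z hz
    rw [ht, transv_apply, symp_add_right, hL.1 z hz.1 l hl, hL'.1 z hz.2 y hy]
    simp
  have htl : t l = y := transv_swap l y hly
  have hsub : L ⊓ L' ≤ actS t L ⊓ L' := fun z hz => by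
    refine ⟨?_, hz.2⟩
    rw [← hfix z hz]; exact (mem_actS t L z).2 hz.1
  have hymem : y ∈ actS t L ⊓ L' := ⟨by rw [← htl]; exact (mem_actS t L l).2 hl, hy⟩
  have hynot : y ∉ L ⊓ L' := fun h => by
    have := hL.1 l hl y h.1
    rw [hly] at this; exact absurd this (by decide)
  have hlt : L ⊓ L' < actS t L ⊓ L' := lt_of_le_of_ne hsub (fun h => hynot (h ▸ hymem))
  have hfl := Submodule.finrank_lt_finrank_of_lt hlt
  have hle : Module.finrank F2 (actS t L ⊓ L' : Submodule F2 (PV n)) ≤ n :=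
    (Submodule.finrank_mono inf_le_right).trans hL'.2.le
  obtain ⟨σ, hσ, h1, h2⟩ := ih _ (by omega) (actS t L) (actS_lag t htG L hL) rfl
  refine ⟨σ * t, mul_mem hσ htG, by rw [actS_mul, h1], fun z hz => ?_⟩
  rw [LinearEquiv.mul_apply, hfix z hz, h2 z (hsub hz)]

lemma trans_flag {n : ℕ} (u v : PV n) (L L' : Submodule F2 (PV n)) (hu : u ≠ 0) (hv : v ≠ 0)
    (hL : L ∈ Lset n n) (hL' : L' ∈ Lset n n) (huL : u ∈ L) (hvL : v ∈ L') :
    ∃ σ ∈ SpG n, σ u = v ∧ actS σ L = L' := by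
  obtain ⟨σ, hσ, h1⟩ := trans_vec u v hu hv
  obtain ⟨τ, hτ, h2, h3⟩ := trans_lag (actS σ L) L' (actS_lag σ hσ L hL) hL'
  refine ⟨τ * σ, mul_mem hτ hσ, ?_, by rw [actS_mul, h2]⟩
  rw [LinearEquiv.mul_apply, h1]
  exact h3 v ⟨by rw [← h1]; exact (mem_actS _ _ _).2 huL, hvL⟩

/-! ### Averages over flags -/

noncomputable instance instFinSub (n : ℕ) : Fintype (Submodule F2 (PV n)) := Fintype.ofFinite _
noncomputable instance instFinSp (n : ℕ) : Fintype (SpG n) := by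
  haveI : Finite (PV n ≃ₗ[F2] PV n) :=
    Finite.of_injective (fun σ => (σ : PV n → PV n)) DFunLike.coe_injective
  exact Fintype.ofFinite _

open Classical in
/-- Flags. -/
noncomputable def flags (n : ℕ) : Finset (PV n × Submodule F2 (PV n)) :=
  Finset.univ.filter fun p => p.1 ≠ 0 ∧ p.2 ∈ Lset n n ∧ p.1 ∈ p.2

lemma mem_flags {n : ℕ} (p : PV n × Submodule F2 (PV n)) :
    p ∈ flags n ↔ p.1 ≠ 0 ∧ p.2 ∈ Lset n n ∧ p.1 ∈ p.2 := by simp [flags]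

def actF {n : ℕ} (σ : SpG n) (p : PV n × Submodule F2 (PV n)) : PV n × Submodule F2 (PV n) :=
  (σ.1 p.1, actS σ.1 p.2)

lemma actF_mul {n : ℕ} (σ τ : SpG n) (p : PV n × Submodule F2 (PV n)) :
    actF (σ * τ) p = actF σ (actF τ p) := by
  simp [actF, actS_mul]

lemma actF_mem {n : ℕ} (σ : SpG n) (p : PV n × Submodule F2 (PV n)) (hp : p ∈ flags n) :
    actF σ p ∈ flags n := by
  rw [mem_flags] at hp ⊢
  refine ⟨?_, actS_lag _ σ.2 _ hp.2.1, (mem_actS _ _ _).2 hp.2.2⟩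
  simpa [actF] using hp.1

lemma actF_one {n : ℕ} (p : PV n × Submodule F2 (PV n)) : actF (1 : SpG n) p = p := by
  simp [actF, actS_one]

lemma sum_flags_act {n : ℕ} (σ : SpG n) (φ : PV n × Submodule F2 (PV n) → ℝ) :
    ∑ p ∈ flags n, φ (actF σ p) = ∑ p ∈ flags n, φ p := by
  refine Finset.sum_bij' (fun p _ => actF σ p) (fun p _ => actF σ⁻¹ p)
    (fun p hp => actF_mem σ p hp) (fun p hp => actF_mem _ p hp) ?_ ?_ (fun _ _ => rfl)
  · intro p _; rw [← actF_mul, inv_mul_cancel, actF_one]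
  · intro p _; rw [← actF_mul, mul_inv_cancel, actF_one]

lemma flag_average {n : ℕ} (φ : PV n × Submodule F2 (PV n) → ℝ)
    (p : PV n × Submodule F2 (PV n)) (hp : p ∈ flags n) :
    ((flags n).card : ℝ) * ∑ σ : SpG n, φ (actF σ p) =
      (Fintype.card (SpG n) : ℝ) * ∑ q ∈ flags n, φ q := by
  have hconst : ∀ q ∈ flags n, ∑ σ : SpG n, φ (actF σ q) = ∑ σ : SpG n, φ (actF σ p) := by
    intro q hq
    rw [mem_flags] at hp hq
    obtain ⟨τ, hτ, h1, h2⟩ := trans_flag p.1 q.1 p.2 q.2 hp.1 hq.1 hp.2.1 hq.2.1 hp.2.2 hq.2.2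
    have hq' : q = actF (⟨τ, hτ⟩ : SpG n) p := by
      simp [actF, h1, h2]
    rw [hq']
    simp only [← actF_mul]
    exact Fintype.sum_equiv (Equiv.mulRight (⟨τ, hτ⟩ : SpG n)) _ _ (fun _ => rfl)
  calc ((flags n).card : ℝ) * ∑ σ : SpG n, φ (actF σ p)
      = ∑ q ∈ flags n, ∑ σ : SpG n, φ (actF σ q) := by
        rw [Finset.sum_congr rfl hconst, Finset.sum_const, nsmul_eq_mul]
    _ = ∑ σ : SpG n, ∑ q ∈ flags n, φ (actF σ q) := Finset.sum_comm
    _ = _ := by simp only [sum_flags_act]; simp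

/-! ### Counting -/

lemma cube_mean {ι : Type*} [Fintype ι] (f : ι → ℝ) (hf : ∀ i, 0 ≤ f i) :
    (∑ i, f i) ^ 3 ≤ (Fintype.card ι : ℝ) ^ 2 * ∑ i, f i ^ 3 := by
  rcases isEmpty_or_nonempty ι with h | h
  · simp
  have h2 := pow_sum_div_card_le_sum_pow (s := Finset.univ) (f := f) (n := 2) (fun i _ => hf i)
  rw [div_le_iff₀ (by simp [Fintype.card_pos])] at h2
  simpa [mul_comm] using h2

lemma k33 {Z A : Type*} [Fintype Z] [Fintype A] (R : Z → A → A → ℝ)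
    (h0 : ∀ z a b, 0 ≤ R z a b) :
    (∑ z, ∑ a, ∑ b, R z a b) ^ 9 ≤
      ((Fintype.card Z : ℝ) * Fintype.card A) ^ 6 *
        (((Fintype.card Z : ℝ) * (Fintype.card A) ^ 3) ^ 2 *
        ∑ z, ∑ a : Fin 3 → A, ∑ b : Fin 3 → A, ∏ i, ∏ j, R z (a i) (b j)) := by
  have e1 : ∑ z, ∑ a, ∑ b, R z a b = ∑ p : Z × A, ∑ a, R p.1 a p.2 := by
    rw [Fintype.sum_prod_type]
    exact Finset.sum_congr rfl fun z _ => Finset.sum_comm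
  have s1 := cube_mean (fun p : Z × A => ∑ a, R p.1 a p.2)
    (fun p => Finset.sum_nonneg fun a _ => h0 _ _ _)
  rw [← e1] at s1
  have e2 : ∑ p : Z × A, (∑ a, R p.1 a p.2) ^ 3 =
      ∑ q : Z × (Fin 3 → A), ∑ b, ∏ i, R q.1 (q.2 i) b := by
    simp only [Fintype.sum_pow, Fintype.sum_prod_type]
    exact Finset.sum_congr rfl fun z _ => Finset.sum_comm
  have s2 := cube_mean (fun q : Z × (Fin 3 → A) => ∑ b, ∏ i, R q.1 (q.2 i) b)
    (fun p => Finset.sum_nonneg fun a _ => Finset.prod_nonneg fun _ _ => h0 _ _ _)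
  rw [← e2] at s2
  have e3 : ∑ q : Z × (Fin 3 → A), (∑ b, ∏ i, R q.1 (q.2 i) b) ^ 3 =
      ∑ z, ∑ a : Fin 3 → A, ∑ b : Fin 3 → A, ∏ i, ∏ j, R z (a i) (b j) := by
    simp only [Fintype.sum_pow, Fintype.sum_prod_type]
    refine Finset.sum_congr rfl fun z _ => Finset.sum_congr rfl fun a _ =>
      Finset.sum_congr rfl fun b _ => Finset.prod_comm
  rw [e3] at s2
  simp only [Fintype.card_prod, Fintype.card_fun, Fintype.card_fin, Nat.cast_mul,
    Nat.cast_pow] at s1 s2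
  have hS : 0 ≤ ∑ z, ∑ a, ∑ b, R z a b := Finset.sum_nonneg fun z _ =>
    Finset.sum_nonneg fun a _ => Finset.sum_nonneg fun b _ => h0 _ _ _
  calc (∑ z, ∑ a, ∑ b, R z a b) ^ 9 = ((∑ z, ∑ a, ∑ b, R z a b) ^ 3) ^ 3 := by ring
    _ ≤ (((Fintype.card Z : ℝ) * Fintype.card A) ^ 2 *
          ∑ p : Z × A, (∑ a, R p.1 a p.2) ^ 3) ^ 3 := pow_le_pow_left₀ (by positivity) s1 3
    _ = ((Fintype.card Z : ℝ) * Fintype.card A) ^ 6 *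
          (∑ p : Z × A, (∑ a, R p.1 a p.2) ^ 3) ^ 3 := by ring
    _ ≤ _ := mul_le_mul_of_nonneg_left s2 (by positivity)

lemma k33_prod {Z U : Type*} [Fintype Z] [Fintype U] (m : ℕ)
    (R : (Fin m → Z) → (Fin m → U) → (Fin m → U) → ℝ)
    (h0 : ∀ z a b, 0 ≤ R z a b) (h1 : ∀ z a b, R z a b ≤ 1)
    (v0 : Z × (Fin 3 → U) × (Fin 3 → U))
    (hgood : ∀ (z : Fin m → Z) (a b : Fin 3 → Fin m → U) (k : Fin m), z k = v0.1 →
      (∀ i, a i k = v0.2.1 i) → (∀ i, b i k = v0.2.2 i) → ∃ i j, R z (a i) (b j) = 0) :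
    (∑ z, ∑ a, ∑ b, R z a b) ^ 9 ≤
      (((Fintype.card Z : ℝ) ^ 8 * (Fintype.card U) ^ 12) *
        ((Fintype.card Z : ℝ) * (Fintype.card U) ^ 6 - 1)) ^ m := by
  classical
  have hk := k33 R h0
  have hle : ∑ z, ∑ a : Fin 3 → Fin m → U, ∑ b : Fin 3 → Fin m → U, ∏ i, ∏ j, R z (a i) (b j) ≤
      ((Fintype.card Z : ℝ) * (Fintype.card U) ^ 6 - 1) ^ m := by
    let V := Z × (Fin 3 → U) × (Fin 3 → U)
    let T := (Fin m → Z) × (Fin 3 → Fin m → U) × (Fin 3 → Fin m → U)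
    let y : T → Fin m → V := fun t k => (t.1 k, fun i => t.2.1 i k, fun i => t.2.2 i k)
    have hy : Function.Injective y := by
      rintro ⟨z, a, b⟩ ⟨z', a', b'⟩ h
      have hz : z = z' := funext fun k => congrArg Prod.fst (congrFun h k)
      have ha : a = a' := by
        funext i k
        exact congrFun (congrArg (fun p => p.2.1) (congrFun h k)) i
      have hb : b = b' := by
        funext i k
        exact congrFun (congrArg (fun p => p.2.2) (congrFun h k)) i
      rw [hz, ha, hb]
    have e1 : ∑ z, ∑ a : Fin 3 → Fin m → U, ∑ b : Fin 3 → Fin m → U, ∏ i, ∏ j, R z (a i) (b j) =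
        ∑ t : T, ∏ i, ∏ j, R t.1 (t.2.1 i) (t.2.2 j) := by
      simp only [T, Fintype.sum_prod_type]
    let P : T → Prop := fun t => ∀ k, y t k ≠ v0
    have hpt : ∀ t : T, ∏ i, ∏ j, R t.1 (t.2.1 i) (t.2.2 j) ≤
        if P t then 1 else 0 := by
      intro t
      split_ifs with h
      · exact Finset.prod_le_one (fun i _ => Finset.prod_nonneg fun j _ => h0 _ _ _)
          (fun i _ => Finset.prod_le_one (fun j _ => h0 _ _ _) (fun j _ => h1 _ _ _))
      · simp only [P, not_forall, not_not] at h
        obtain ⟨k, hkk⟩ := h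
        obtain ⟨i, j, hij⟩ := hgood t.1 t.2.1 t.2.2 k (congrArg Prod.fst hkk)
          (fun i => congrFun (congrArg (fun p => p.2.1) hkk) i)
          (fun i => congrFun (congrArg (fun p => p.2.2) hkk) i)
        refine le_of_eq (Finset.prod_eq_zero (Finset.mem_univ i) ?_)
        exact Finset.prod_eq_zero (Finset.mem_univ j) hij
    rw [e1]
    refine (Finset.sum_le_sum fun t _ => hpt t).trans ?_
    rw [← Finset.sum_filter, Finset.sum_const, nsmul_eq_mul, mul_one]
    have hcard : (Finset.univ.filter fun t : T => P t).card ≤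
        (Fintype.piFinset (fun _ : Fin m => (Finset.univ : Finset V).erase v0)).card := by
      refine Finset.card_le_card_of_injOn y ?_ hy.injOn
      intro t ht
      have := (Finset.mem_filter.1 ht).2
      simp only [Finset.mem_coe, Fintype.mem_piFinset, Finset.mem_erase, Finset.mem_univ, and_true]
      exact this
    refine (Nat.cast_le.2 hcard).trans (le_of_eq ?_)
    have hVpos : 1 ≤ Fintype.card V := Fintype.card_pos_iff.2 ⟨v0⟩
    rw [Fintype.card_piFinset, Finset.prod_const, Finset.card_erase_of_mem (Finset.mem_univ _),
      Finset.card_univ, Finset.card_univ, Fintype.card_fin, Nat.cast_pow, Nat.cast_sub hVpos, Nat.cast_one]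
    congr 2
    simp only [V, Fintype.card_prod, Fintype.card_fun, Fintype.card_fin]
    push_cast; ring
  refine hk.trans ?_
  calc _ ≤ ((Fintype.card (Fin m → Z) : ℝ) * Fintype.card (Fin m → U)) ^ 6 *
        (((Fintype.card (Fin m → Z) : ℝ) * (Fintype.card (Fin m → U)) ^ 3) ^ 2 *
          ((Fintype.card Z : ℝ) * (Fintype.card U) ^ 6 - 1) ^ m) := by gcongr
    _ = _ := by
      simp only [Fintype.card_fun, Fintype.card_fin, Nat.cast_pow]
      rw [mul_pow (_ * _) _ m, ← mul_assoc]
      congr 1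
      simp only [mul_pow, ← pow_mul]
      rw [mul_comm m, mul_comm m, mul_comm m]
      ring

/-! ### The magic square -/

abbrev UU := Bool × Fin 3
abbrev ZZ := Bool × Fin 3 × Fin 3

def cell (i j : Fin 3) : PV 2 :=
  (![if i = 1 then 0 else if j = 1 then 0 else 1, if i = 1 then 0 else if j = 0 then 0 else 1],
   ![if i = 0 then 0 else if j = 0 then 0 else 1, if i = 0 then 0 else if j = 1 then 0 else 1])

def inC (c : UU) (p : PV 2) : Prop :=
  if c.1 then symp p (cell c.2 0) = 0 ∧ symp p (cell c.2 1) = 0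
  else symp p (cell 0 c.2) = 0 ∧ symp p (cell 1 c.2) = 0

instance instDecInC (c : UU) (p : PV 2) : Decidable (inC c p) := by unfold inC; infer_instance

def alf (z : ZZ) (a : UU) : UU :=
  if z.1 then a else (a.1, if a.1 then z.2.1 else z.2.2)

def wv (z : ZZ) : PV 2 := if z.1 then 0 else cell z.2.1 z.2.2

lemma cell_row : ∀ i, cell i 2 = cell i 0 + cell i 1 := by decide
lemma cell_col : ∀ j, cell 2 j = cell 0 j + cell 1 j := by decide
lemma cell_inC_row : ∀ i j, inC (true, i) (cell i j) := by decide
lemma cell_inC_col : ∀ i j, inC (false, j) (cell i j) := by decide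
lemma inC_add (c : UU) (p q : PV 2) (hp : inC c p) (hq : inC c q) : inC c (p + q) := by
  unfold inC at *
  split_ifs at * <;> simp only [symp_add_left, hp, hq, add_zero, and_self]
lemma inC_zero (c : UU) : inC c 0 := by
  unfold inC
  split_ifs <;> simp only [symp_zero_left, and_self]
lemma inC_smul (c : UU) (t : F2) (p : PV 2) (hp : inC c p) : inC c (t • p) := by
  rcases f2_cases t with h | h
  · rw [h, zero_smul]; exact inC_zero c
  · rwa [h, one_smul]
set_option maxRecDepth 100000 in
lemma inC_iso : ∀ c : UU, ∀ p q : PV 2, inC c p → inC c q → symp p q = 0 := by decide +kernel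
lemma inC_card : ∀ c : UU, (Finset.univ.filter fun p => inC c p).card = 4 := by decide +kernel
lemma wv_inC : ∀ z a, inC (alf z a) (wv z) := by decide +kernel
def fibn (z : ZZ) (c : UU) : ℕ := if z.1 then 1 else if (if c.1 then z.2.1 else z.2.2) = c.2 then 3 else 0
lemma fibn_eq : ∀ (z : ZZ) (c : UU), ∑ a : UU, (if alf z a = c then 1 else 0) = fibn z c := by
  decide +kernel
lemma mult_aux : ∀ (c c' : UU) (p : PV 2),
    ∑ z : ZZ, (if wv z = p then fibn z c * fibn z c' else 0) =
      if inC c p ∧ inC c' p then 9 else 0 := by decide +kernel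
lemma mult_local (c c' : UU) (p : PV 2) :
    (Finset.univ.filter fun y : ZZ × UU × UU =>
      alf y.1 y.2.1 = c ∧ alf y.1 y.2.2 = c' ∧ wv y.1 = p).card =
      if inC c p ∧ inC c' p then 9 else 0 := by
  rw [← mult_aux, Finset.card_filter, Fintype.sum_prod_type]
  refine Finset.sum_congr rfl fun z _ => ?_
  rw [Fintype.sum_prod_type]
  by_cases h : wv z = p
  · simp only [h, and_true, if_true, ← fibn_eq, Finset.sum_mul_sum]
    refine Finset.sum_congr rfl fun a _ => Finset.sum_congr rfl fun b _ => ?_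
    by_cases h1 : alf z a = c <;> by_cases h2 : alf z b = c' <;> simp [h1, h2]
  · simp [h]

attribute [irreducible] inC
/-! ### Blocks -/

def blk {m : ℕ} (v : PV (m * 2)) (k : Fin m) : PV 2 :=
  (fun i => v.1 (finProdFinEquiv (k, i)), fun i => v.2 (finProdFinEquiv (k, i)))

def asm {m : ℕ} (g : Fin m → PV 2) : PV (m * 2) :=
  (fun j => (g (finProdFinEquiv.symm j).1).1 (finProdFinEquiv.symm j).2,
   fun j => (g (finProdFinEquiv.symm j).1).2 (finProdFinEquiv.symm j).2)

lemma blk_asm {m : ℕ} (g : Fin m → PV 2) : blk (asm g) = g := by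
  funext k
  simp only [blk, asm, Equiv.symm_apply_apply]

lemma asm_blk {m : ℕ} (v : PV (m * 2)) : asm (blk v) = v := by
  simp only [blk, asm, Prod.mk.eta, Equiv.apply_symm_apply]

lemma blk_add {m : ℕ} (v w : PV (m * 2)) (k : Fin m) : blk (v + w) k = blk v k + blk w k := rfl
lemma blk_smul {m : ℕ} (t : F2) (v : PV (m * 2)) (k : Fin m) : blk (t • v) k = t • blk v k := rfl
lemma blk_zero {m : ℕ} (k : Fin m) : blk (0 : PV (m * 2)) k = 0 := rfl

def blkE (m : ℕ) : PV (m * 2) ≃ (Fin m → PV 2) := ⟨blk, asm, asm_blk, blk_asm⟩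

lemma asm_add {m : ℕ} (g h : Fin m → PV 2) : asm (g + h) = asm g + asm h := rfl

lemma symp_blk {m : ℕ} (v w : PV (m * 2)) : symp v w = ∑ k, symp (blk v k) (blk w k) := by
  simp only [symp, blk, Finset.sum_add_distrib]
  rw [← finProdFinEquiv.sum_comp, ← finProdFinEquiv.sum_comp, Fintype.sum_prod_type,
    Fintype.sum_prod_type]

def ctx {m : ℕ} (c : Fin m → UU) : Submodule F2 (PV (m * 2)) where
  carrier := {v | ∀ k, inC (c k) (blk v k)}
  add_mem' := by
    intro v w hv hw k
    rw [blk_add]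
    exact inC_add (c k) (blk v k) (blk w k) (hv k) (hw k)
  zero_mem' := by
    intro k
    rw [blk_zero]
    exact inC_zero (c k)
  smul_mem' := by
    intro t v hv k
    rw [blk_smul]
    exact inC_smul (c k) t (blk v k) (hv k)

lemma mem_ctx {m : ℕ} (c : Fin m → UU) (v : PV (m * 2)) :
    v ∈ ctx c ↔ ∀ k, inC (c k) (blk v k) := Iff.rfl

lemma ctx_lag {m : ℕ} (c : Fin m → UU) : ctx c ∈ Lset (m * 2) (m * 2) := by
  classical
  refine ⟨fun x hx y hy => ?_, ?_⟩
  · rw [symp_blk]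
    exact Finset.sum_eq_zero fun k _ => inC_iso _ _ _ (hx k) (hy k)
  · have h1 : Nat.card (ctx c) = 4 ^ m := by
      have e : (ctx c) ≃ {g : Fin m → PV 2 // g ∈ Fintype.piFinset
          (fun k => Finset.univ.filter fun p => inC (c k) p)} :=
        (blkE m).subtypeEquiv (fun v => by
          simp only [Fintype.mem_piFinset, Finset.mem_filter, Finset.mem_univ, true_and]
          exact Iff.rfl)
      rw [Nat.card_congr e, Nat.card_eq_fintype_card, Fintype.card_coe, Fintype.card_piFinset]
      simp only [inC_card]
      simp
    have h2 := Module.natCard_eq_pow_finrank (K := F2) (V := ctx c)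
    rw [h1, Nat.card_eq_fintype_card, ZMod.card, show (4 : ℕ) = 2 ^ 2 by norm_num, ← pow_mul] at h2
    have := Nat.pow_right_injective (le_refl 2) h2
    omega

def alfm {m : ℕ} (z : Fin m → ZZ) (a : Fin m → UU) : Fin m → UU := fun k => alf (z k) (a k)
def wvm {m : ℕ} (z : Fin m → ZZ) : PV (m * 2) := asm fun k => wv (z k)

lemma wvm_mem {m : ℕ} (z : Fin m → ZZ) (a : Fin m → UU) : wvm z ∈ ctx (alfm z a) := by
  intro k
  rw [wvm, blk_asm]; exact wv_inC _ _

open Classical in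
lemma sum_zab {m : ℕ} (ψ : (Fin m → UU) → (Fin m → UU) → PV (m * 2) → ℝ) :
    ∑ z : Fin m → ZZ, ∑ a : Fin m → UU, ∑ b : Fin m → UU, ψ (alfm z a) (alfm z b) (wvm z) =
      9 ^ m * ∑ c : Fin m → UU, ∑ c' : Fin m → UU,
        ∑ w ∈ Finset.univ.filter (fun w => w ∈ ctx c ∧ w ∈ ctx c'), ψ c c' w := by
  let Y := Fin m → ZZ × UU × UU
  let q : Y → (Fin m → UU) × (Fin m → UU) × PV (m * 2) := fun y =>
    (alfm (fun k => (y k).1) (fun k => (y k).2.1), alfm (fun k => (y k).1) (fun k => (y k).2.2),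
      wvm (fun k => (y k).1))
  have e1 : ∑ z : Fin m → ZZ, ∑ a : Fin m → UU, ∑ b : Fin m → UU,
      ψ (alfm z a) (alfm z b) (wvm z) = ∑ y : Y, ψ (q y).1 (q y).2.1 (q y).2.2 := by
    let e : Y ≃ (Fin m → ZZ) × (Fin m → UU) × (Fin m → UU) :=
      { toFun := fun y => (fun k => (y k).1, fun k => (y k).2.1, fun k => (y k).2.2)
        invFun := fun t k => (t.1 k, t.2.1 k, t.2.2 k)
        left_inv := fun _ => rfl
        right_inv := fun _ => rfl }
    rw [← e.symm.sum_comp]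
    simp only [Fintype.sum_prod_type]
    rfl
  have e2 : ∑ y : Y, ψ (q y).1 (q y).2.1 (q y).2.2 =
      ∑ t : (Fin m → UU) × (Fin m → UU) × PV (m * 2),
        ((Finset.univ.filter fun y => q y = t).card : ℝ) * ψ t.1 t.2.1 t.2.2 := by
    rw [← Finset.sum_fiberwise Finset.univ q]
    refine Finset.sum_congr rfl fun t _ => ?_
    rw [← nsmul_eq_mul, ← Finset.sum_const]
    refine Finset.sum_congr rfl fun y hy => ?_
    rw [(Finset.mem_filter.1 hy).2]
  have e3 : ∀ t : (Fin m → UU) × (Fin m → UU) × PV (m * 2),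
      (Finset.univ.filter fun y => q y = t).card =
        if t.2.2 ∈ ctx t.1 ∧ t.2.2 ∈ ctx t.2.1 then 9 ^ m else 0 := by
    rintro ⟨c, c', w⟩
    have h1 : (Finset.univ.filter fun y => q y = (c, c', w)) =
        Fintype.piFinset (fun k => Finset.univ.filter fun y : ZZ × UU × UU =>
          alf y.1 y.2.1 = c k ∧ alf y.1 y.2.2 = c' k ∧ wv y.1 = blk w k) := by
      ext y
      simp only [Finset.mem_filter, Finset.mem_univ, true_and, q,
        Prod.mk.injEq]
      have hw : wvm (fun k => (y k).1) = w ↔ ∀ k, wv (y k).1 = blk w k := by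
        rw [← funext_iff, wvm]
        constructor
        · intro h; rw [← h, blk_asm]
        · intro h; rw [h, asm_blk]
      rw [hw, funext_iff, funext_iff]
      refine Iff.trans ?_ (Fintype.mem_piFinset).symm
      simp only [alfm, Finset.mem_filter, Finset.mem_univ, true_and, forall_and]
    rw [h1, Fintype.card_piFinset]
    simp only [mult_local]
    split_ifs with h
    · rw [Finset.prod_congr rfl (fun k _ => if_pos ⟨h.1 k, h.2 k⟩)]
      simp
    · have : ∃ k, ¬ (inC (c k) (blk w k) ∧ inC (c' k) (blk w k)) := by
        by_contra hcon
        push Not at hcon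
        exact h ⟨fun k => (hcon k).1, fun k => (hcon k).2⟩
      obtain ⟨k, hk⟩ := this
      exact Finset.prod_eq_zero (Finset.mem_univ k) (if_neg hk)
  rw [e1, e2, Fintype.sum_prod_type, Finset.mul_sum]
  refine Finset.sum_congr rfl fun c _ => ?_
  rw [Fintype.sum_prod_type, Finset.mul_sum]
  refine Finset.sum_congr rfl fun c' _ => ?_
  rw [Finset.sum_filter, Finset.mul_sum]
  refine Finset.sum_congr rfl fun w _ => ?_
  rw [e3]
  by_cases h : w ∈ ctx c ∧ w ∈ ctx c'
  · rw [if_pos h, if_pos h]; push_cast; rfl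
  · rw [if_neg h, if_neg h]; simp

/-! ### Signs -/

noncomputable def sgn (a : F2) : ℝ := if a = 0 then 1 else -1

lemma sgn_add (a b : F2) : sgn (a + b) = sgn a * sgn b := by
  rcases f2_cases a with rfl | rfl <;> rcases f2_cases b with rfl | rfl <;>
    simp [sgn, show (1 + 1 : F2) = 0 from rfl]

lemma sgn_mul_self (a : F2) : sgn a * sgn a = 1 := by
  rw [← sgn_add, f2_add_self]; simp [sgn]

open Classical in
lemma char_sum {m : ℕ} (H : (Fin m → UU) → PV (m * 2) → F2) (μ : PV (m * 2) → PV (m * 2) → F2)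
    (hH : ∀ c, ∀ w ∈ ctx c, ∀ w' ∈ ctx c, H c (w + w') = H c w + H c w' + μ w w')
    (c c' : Fin m → UU) :
    ∑ w ∈ Finset.univ.filter (fun w => w ∈ ctx c ∧ w ∈ ctx c'), sgn (H c w) * sgn (H c' w) ≤
      ∑ w ∈ Finset.univ.filter (fun w => w ∈ ctx c ∧ w ∈ ctx c'),
        (if ∀ w, w ∈ ctx c → w ∈ ctx c' → H c w = H c' w then (1 : ℝ) else 0) := by
  split_ifs with h
  · refine Finset.sum_le_sum fun w hw => ?_
    have hw' := (Finset.mem_filter.1 hw).2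
    rw [h w hw'.1 hw'.2, sgn_mul_self]
  · push Not at h
    obtain ⟨u, hu, hu', hne⟩ := h
    have hs : sgn (H c u) * sgn (H c' u) = -1 := by
      rw [← sgn_add]
      have : H c u + H c' u = 1 := by
        revert hne
        generalize H c u = a
        generalize H c' u = b
        revert a b; decide
      rw [this]; simp [sgn]
    have hshift : ∑ w ∈ Finset.univ.filter (fun w => w ∈ ctx c ∧ w ∈ ctx c'),
          sgn (H c (w + u)) * sgn (H c' (w + u)) =
        ∑ w ∈ Finset.univ.filter (fun w => w ∈ ctx c ∧ w ∈ ctx c'),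
          sgn (H c w) * sgn (H c' w) := by
      have hself : ∀ w : PV (m * 2), w + u + u = w := fun w => by
        rw [add_assoc, pv_add_self, add_zero]
      have hmem : ∀ w ∈ Finset.univ.filter (fun w => w ∈ ctx c ∧ w ∈ ctx c'),
          w + u ∈ Finset.univ.filter (fun w => w ∈ ctx c ∧ w ∈ ctx c') := by
        intro w hw
        have := (Finset.mem_filter.1 hw).2
        exact Finset.mem_filter.2 ⟨Finset.mem_univ _, add_mem this.1 hu, add_mem this.2 hu'⟩
      exact Finset.sum_bij' (fun w _ => w + u) (fun w _ => w + u) hmem hmem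
        (fun w _ => hself w) (fun w _ => hself w) (fun _ _ => rfl)
    have hneg : ∑ w ∈ Finset.univ.filter (fun w => w ∈ ctx c ∧ w ∈ ctx c'),
          sgn (H c (w + u)) * sgn (H c' (w + u)) =
        ∑ w ∈ Finset.univ.filter (fun w => w ∈ ctx c ∧ w ∈ ctx c'),
          -(sgn (H c w) * sgn (H c' w)) := by
      refine Finset.sum_congr rfl fun w hw => ?_
      have hw' := (Finset.mem_filter.1 hw).2
      rw [hH c w hw'.1 u hu, hH c' w hw'.2 u hu']
      simp only [sgn_add]
      have := sgn_mul_self (μ w u)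
      linear_combination (sgn (H c w) * sgn (H c' w) * (sgn (H c u) * sgn (H c' u))) * this
        + (sgn (H c w) * sgn (H c' w)) * hs
    rw [Finset.sum_neg_distrib] at hneg
    simp only [Finset.sum_const_zero]
    linarith

/-- the bound for one embedded product of magic squares -/
lemma one_structure {m : ℕ} (H : (Fin m → UU) → PV (m * 2) → F2) (σ : SpG (m * 2))
    (hH : ∀ c, ∀ w ∈ ctx c, ∀ w' ∈ ctx c,
      H c (w + w') = H c w + H c w' + wght (σ.1 w) (σ.1 w')) (ε : ℝ) (hε0 : 0 ≤ ε)
    (hε : ε ^ 18 = 1 - 1 / (18 * 6 ^ 6)) :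
    ∑ z : Fin m → ZZ, (∑ a : Fin m → UU, sgn (H (alfm z a) (wvm z))) ^ 2 ≤
      648 ^ m * ε ^ (m * 2) := by
  classical
  let cons : (Fin m → UU) → (Fin m → UU) → Prop :=
    fun c c' => ∀ w, w ∈ ctx c → w ∈ ctx c' → H c w = H c' w
  let R : (Fin m → ZZ) → (Fin m → UU) → (Fin m → UU) → ℝ :=
    fun z a b => if cons (alfm z a) (alfm z b) then 1 else 0
  have h1 : ∑ z : Fin m → ZZ, (∑ a : Fin m → UU, sgn (H (alfm z a) (wvm z))) ^ 2 ≤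
      ∑ z, ∑ a, ∑ b, R z a b := by
    have e1 : ∑ z : Fin m → ZZ, (∑ a : Fin m → UU, sgn (H (alfm z a) (wvm z))) ^ 2 =
        ∑ z : Fin m → ZZ, ∑ a : Fin m → UU, ∑ b : Fin m → UU,
          sgn (H (alfm z a) (wvm z)) * sgn (H (alfm z b) (wvm z)) := by
      refine Finset.sum_congr rfl fun z _ => ?_
      rw [sq, Finset.sum_mul_sum]
    rw [e1, sum_zab (fun c c' w => sgn (H c w) * sgn (H c' w)),
      sum_zab (fun c c' _ => if cons c c' then (1 : ℝ) else 0)]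
    refine mul_le_mul_of_nonneg_left ?_ (by positivity)
    exact Finset.sum_le_sum fun c _ => Finset.sum_le_sum fun c' _ => char_sum H _ hH c c'
  refine h1.trans ?_
  have h2 := k33_prod m R (fun z a b => by simp only [R]; split_ifs <;> norm_num)
    (fun z a b => by simp only [R]; split_ifs <;> norm_num)
    ((true, 0, 0), (fun i => (true, i)), (fun j => (false, j))) (by
      intro z a b k hz ha hb
      by_contra hcon
      push Not at hcon
      have hc : ∀ i j, cons (alfm z (a i)) (alfm z (b j)) := fun i j => by
        by_contra h
        exact hcon i j (if_neg h)
      let u : Fin 3 → Fin 3 → PV (m * 2) := fun i j => asm (Pi.single k (cell i j))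
      have hua : ∀ i j, u i j ∈ ctx (alfm z (a i)) := by
        intro i j l
        simp only [u, blk_asm]
        by_cases hl : l = k
        · subst hl
          simp only [Pi.single_eq_same, alfm, hz, ha, alf, if_true]
          exact cell_inC_row i j
        · rw [Pi.single_eq_of_ne hl]; exact inC_zero _
      have hub : ∀ i j, u i j ∈ ctx (alfm z (b j)) := by
        intro i j l
        simp only [u, blk_asm]
        by_cases hl : l = k
        · subst hl
          simp only [Pi.single_eq_same, alfm, hz, hb, alf, if_true]
          exact cell_inC_col i j
        · rw [Pi.single_eq_of_ne hl]; exact inC_zero _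
      have hrow : ∀ i, u i 2 = u i 0 + u i 1 := fun i => by
        simp only [u]; rw [← asm_add, ← Pi.single_add, cell_row]
      have hcol : ∀ j, u 2 j = u 0 j + u 1 j := fun j => by
        simp only [u]; rw [← asm_add, ← Pi.single_add, cell_col]
      have hsymp : ∀ i j i' j', symp (u i j) (u i' j') = symp (cell i j) (cell i' j') := by
        intro i j i' j'
        rw [symp_blk, Finset.sum_eq_single k]
        · simp only [u, blk_asm, Pi.single_eq_same]
        · intro l _ hl
          simp only [u, blk_asm, Pi.single_eq_of_ne hl, symp_zero_left]
        · simp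
      have hs' : ∀ i j i' j', symp (σ.1 (u i j)) (σ.1 (u i' j')) =
          symp (cell i j) (cell i' j') := fun i j i' j' => (σ.2 _ _).trans (hsymp i j i' j')
      have r := fun i => hH _ _ (hua i 0) _ (hua i 1)
      have s := fun j => hH _ _ (hub 0 j) _ (hub 1 j)
      simp only [← hrow] at r
      simp only [← hcol] at s
      have hmag := magic (σ.1 (u 0 0)) (σ.1 (u 0 1)) (σ.1 (u 1 0)) (σ.1 (u 1 1))
        (by rw [hs']; decide) (by rw [hs']; decide) (by rw [hs']; decide) (by rw [hs']; decide)
        (by rw [hs']; decide) (by rw [hs']; decide)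
      simp only [← map_add, ← hrow, ← hcol] at hmag
      have t := fun i j => hc i j (u i j) (hua i j) (hub i j)
      simp only [t] at r
      have r0 := r 0
      have r1 := r 1
      have r2 := r 2
      have s0 := s 0
      have s1 := s 1
      have s2 := s 2
      have c2 : (2 : F2) = 0 := rfl
      have hbad : (1 : F2) = 0 := by
        linear_combination -hmag - r0 - r1 - r2 - s0 - s1 - s2 +
          (H (alfm z (b 2)) (u 2 2) - H (alfm z (b 0)) (u 0 0) - H (alfm z (b 1)) (u 0 1)
            - H (alfm z (b 0)) (u 1 0) - H (alfm z (b 1)) (u 1 1)) * c2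
      exact absurd hbad (by decide))
  have hpow : (∑ z, ∑ a, ∑ b, R z a b) ^ 9 ≤ (648 ^ m * ε ^ (m * 2)) ^ 9 := by
    refine h2.trans (le_of_eq ?_)
    rw [show (648 ^ m * ε ^ (m * 2)) ^ 9 = (648 ^ 9 * ε ^ 18) ^ m by
      rw [mul_pow, mul_pow, ← pow_mul, ← pow_mul, ← pow_mul, ← pow_mul]; congr 2 <;> ring, hε]
    congr 1
    simp only [Fintype.card_prod, Fintype.card_bool, Fintype.card_fin]
    norm_num
  exact le_of_pow_le_pow_left₀ (by norm_num) (by positivity) hpow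

/-! ### The game -/

open Classical in
noncomputable def extv {n : ℕ} (f : (S : Submodule F2 (PV n)) → (S → F2))
    (S : Submodule F2 (PV n)) (v : PV n) : F2 := if h : v ∈ S then f S ⟨v, h⟩ else 0

open Classical in
noncomputable def lagT (n : ℕ) (v : PV n) : Finset (Submodule F2 (PV n)) :=
  Finset.univ.filter fun S => S ∈ Lset n n ∧ v ∈ S

lemma mem_lagT {n : ℕ} (v : PV n) (S : Submodule F2 (PV n)) :
    S ∈ lagT n v ↔ S ∈ Lset n n ∧ v ∈ S := by simp [lagT]

open Classical in
noncomputable def nz (n : ℕ) : Finset (PV n) := Finset.univ.filter fun v => v ≠ 0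

lemma mem_nz {n : ℕ} (v : PV n) : v ∈ nz n ↔ v ≠ 0 := by simp [nz]

noncomputable def Av {n : ℕ} (f : (S : Submodule F2 (PV n)) → (S → F2)) (v : PV n) : ℝ :=
  (∑ S ∈ lagT n v, sgn (extv f S v)) / ((lagT n v).card : ℝ)

lemma sum_flags {n : ℕ} (φ : PV n × Submodule F2 (PV n) → ℝ) :
    ∑ q ∈ flags n, φ q = ∑ v ∈ nz n, ∑ S ∈ lagT n v, φ (v, S) := by
  classical
  rw [flags, Finset.sum_filter, Fintype.sum_prod_type, nz, Finset.sum_filter]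
  refine Finset.sum_congr rfl fun v _ => ?_
  rw [lagT, Finset.sum_filter]
  by_cases h : v = 0
  · subst h; simp
  · simp only [ne_eq, h, not_false_eq_true, true_and, if_true]

lemma lagT_card {n : ℕ} (u v : PV n) (hu : u ≠ 0) (hv : v ≠ 0) :
    (lagT n u).card = (lagT n v).card := by
  have key : ∀ u v : PV n, u ≠ 0 → v ≠ 0 → (lagT n u).card ≤ (lagT n v).card := by
    intro u v hu hv
    obtain ⟨σ, hσ, h⟩ := trans_vec u v hu hv
    refine Finset.card_le_card_of_injOn (actS σ) ?_ ?_
    · intro S hS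
      have hS' := (mem_lagT _ _).1 hS
      refine (mem_lagT _ _).2 ⟨actS_lag σ hσ S hS'.1, ?_⟩
      rw [← h]; exact (mem_actS _ _ _).2 hS'.2
    · intro S _ T _ hST
      ext x
      rw [← mem_actS σ S, ← mem_actS σ T]
      have : actS σ S = actS σ T := hST
      rw [this]
  exact le_antisymm (key u v hu hv) (key v u hv hu)

lemma Lset_one {n : ℕ} : Lset n 1 = (fun v : PV n => Submodule.span F2 {v}) '' (nz n : Set (PV n)) := by
  ext S
  constructor
  · rintro ⟨_, h2⟩
    obtain ⟨v, hv, hs⟩ := finrank_eq_one_iff'.1 h2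
    refine ⟨v, ?_, ?_⟩
    · rw [Finset.mem_coe, mem_nz]
      intro h; exact hv (Subtype.ext h)
    · apply le_antisymm
      · rw [Submodule.span_singleton_le_iff_mem]; exact v.2
      · intro w hw
        obtain ⟨c, hc⟩ := hs ⟨w, hw⟩
        exact Submodule.mem_span_singleton.2 ⟨c, congrArg Subtype.val hc⟩
  · rintro ⟨v, hv, rfl⟩
    rw [Finset.mem_coe, mem_nz] at hv
    refine ⟨?_, finrank_span_singleton hv⟩
    intro x hx y hy
    obtain ⟨c, rfl⟩ := Submodule.mem_span_singleton.1 hx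
    obtain ⟨d, rfl⟩ := Submodule.mem_span_singleton.1 hy
    rw [symp_smul_left, symp_comm, symp_smul_left, symp_self]; simp

lemma span_inj {n : ℕ} : Set.InjOn (fun v : PV n => Submodule.span F2 {v}) (nz n : Set (PV n)) := by
  intro u hu v _ h
  rw [Finset.mem_coe, mem_nz] at hu
  have h' : Submodule.span F2 {u} = Submodule.span F2 {v} := h
  have : u ∈ Submodule.span F2 {v} := by rw [← h']; exact Submodule.mem_span_singleton_self u
  obtain ⟨c, hc⟩ := Submodule.mem_span_singleton.1 this
  rcases f2_cases c with rfl | rfl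
  · rw [zero_smul] at hc; exact absurd hc.symm hu
  · rw [one_smul] at hc; exact hc.symm

lemma qp_card {n : ℕ} (v : PV n) :
    (Nat.card (questionPairs n (Submodule.span F2 {v})) : ℝ) = ((lagT n v).card : ℝ) ^ 2 := by
  have : questionPairs n (Submodule.span F2 {v}) =
      ((lagT n v ×ˢ lagT n v : Finset _) : Set (Submodule F2 (PV n) × Submodule F2 (PV n))) := by
    ext p
    rw [Finset.mem_coe, Finset.mem_product, mem_lagT, mem_lagT]
    simp only [questionPairs, Set.mem_ofPred_eq, Submodule.span_singleton_le_iff_mem]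
    tauto
  rw [this, Nat.card_coe_set_eq, Set.ncard_coe_finset, Finset.card_product]
  push_cast; ring

lemma sgn_agree (a b : F2) : (if a = b then (1 : ℝ) else 0) = (1 + sgn a * sgn b) / 2 := by
  rcases f2_cases a with rfl | rfl <;> rcases f2_cases b with rfl | rfl <;> norm_num [sgn]

lemma ap_card {n : ℕ} (f g : (S : Submodule F2 (PV n)) → (S → F2)) (v : PV n) (hv : v ≠ 0) :
    (Nat.card (agreePairs n f g (Submodule.span F2 {v})) : ℝ) =
      (((lagT n v).card : ℝ) ^ 2 +
        (∑ S ∈ lagT n v, sgn (extv f S v)) * (∑ S ∈ lagT n v, sgn (extv g S v))) / 2 := by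
  classical
  have : agreePairs n f g (Submodule.span F2 {v}) =
      (((lagT n v ×ˢ lagT n v).filter fun p => extv f p.1 v = extv g p.2 v : Finset _) :
        Set (Submodule F2 (PV n) × Submodule F2 (PV n))) := by
    ext p
    rw [Finset.mem_coe, Finset.mem_filter, Finset.mem_product, mem_lagT, mem_lagT]
    simp only [agreePairs, Set.mem_ofPred_eq]
    constructor
    · rintro ⟨h1, h2, h3, h4, u, hu, hu0, he⟩
      have huv : u = v := by
        obtain ⟨c, hc⟩ := Submodule.mem_span_singleton.1 hu
        rcases f2_cases c with rfl | rfl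
        · rw [zero_smul] at hc; exact absurd hc.symm hu0
        · rw [one_smul] at hc; exact hc.symm
      subst huv
      refine ⟨⟨⟨h1, h3 hu⟩, h2, h4 hu⟩, ?_⟩
      rw [extv, extv, dif_pos (h3 hu), dif_pos (h4 hu)]
      exact he
    · rintro ⟨⟨⟨h1, h3⟩, h2, h4⟩, he⟩
      rw [extv, extv, dif_pos h3, dif_pos h4] at he
      exact ⟨h1, h2, (Submodule.span_singleton_le_iff_mem _ _).2 h3,
        (Submodule.span_singleton_le_iff_mem _ _).2 h4, v,
        Submodule.mem_span_singleton_self v, hv, he⟩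
  rw [this, Nat.card_coe_set_eq, Set.ncard_coe_finset, Finset.card_filter, Nat.cast_sum]
  simp only [Nat.cast_ite, Nat.cast_one, Nat.cast_zero, sgn_agree]
  rw [← Finset.sum_div, Finset.sum_add_distrib, Finset.sum_mul_sum, Finset.sum_product,
    Finset.sum_product]
  simp [sq]

lemma agreeProb_eq {n : ℕ} (hN : ∀ v : PV n, v ≠ 0 → 0 < (lagT n v).card)
    (f g : (S : Submodule F2 (PV n)) → (S → F2)) :
    agreeProb n f g = (1 / ((nz n).card : ℝ)) * ∑ v ∈ nz n, (1 + Av f v * Av g v) / 2 := by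
  rw [agreeProb, Lset_one, finsum_mem_image span_inj, finsum_mem_coe_finset, Nat.card_coe_set_eq,
    span_inj.ncard_image, Set.ncard_coe_finset]
  congr 1
  refine Finset.sum_congr rfl fun v hv => ?_
  have hv' := (mem_nz v).1 hv
  have := hN v hv'
  have h0 : ((lagT n v).card : ℝ) ≠ 0 := by exact_mod_cast this.ne'
  rw [qp_card, ap_card f g v hv', Av, Av]
  field_simp

noncomputable def Eb {n : ℕ} (f : (S : Submodule F2 (PV n)) → (S → F2)) : ℝ :=
  (1 / ((nz n).card : ℝ)) * ∑ v ∈ nz n, (Av f v) ^ 2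

lemma cs_bound {n : ℕ} (f : (S : Submodule F2 (PV n)) → (S → F2)) {ι : Type} [Fintype ι]
    (v0 : PV n) (x : ι → Submodule F2 (PV n)) (hx : ∀ i, (v0, x i) ∈ flags n) [Nonempty ι] :
    (Fintype.card (SpG n) : ℝ) * (Fintype.card ι : ℝ) ^ 2 * Eb f ≤
      ∑ σ : SpG n, (∑ i, sgn (extv f (actS σ.1 (x i)) (σ.1 v0))) ^ 2 := by
  obtain ⟨i0⟩ := ‹Nonempty ι›
  have hv0 : v0 ≠ 0 := ((mem_flags _).1 (hx i0)).1
  have hlag : ∀ v : PV n, v ≠ 0 → (lagT n v).card = (lagT n v0).card :=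
    fun v hv => lagT_card v v0 hv hv0
  have hNpos : (0 : ℝ) < ((lagT n v0).card : ℝ) := by
    have := (mem_flags _).1 (hx i0)
    exact_mod_cast Finset.card_pos.2 ⟨x i0, (mem_lagT _ _).2 this.2⟩
  have hMpos : (0 : ℝ) < ((nz n).card : ℝ) := by
    exact_mod_cast Finset.card_pos.2 ⟨v0, (mem_nz _).2 hv0⟩
  set N : ℝ := ((lagT n v0).card : ℝ) with hN
  set M : ℝ := ((nz n).card : ℝ) with hM
  set G : ℝ := (Fintype.card (SpG n) : ℝ) with hG
  have hflags : ((flags n).card : ℝ) = M * N := by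
    have := sum_flags (n := n) (fun _ => 1)
    rw [Finset.sum_const, nsmul_eq_mul, mul_one] at this
    rw [this]
    rw [Finset.sum_congr rfl (fun v hv => by
      rw [Finset.sum_const, nsmul_eq_mul, mul_one, hlag v ((mem_nz v).1 hv)])]
    rw [Finset.sum_const, nsmul_eq_mul]
  have hAN : ∀ v : PV n, v ≠ 0 → ∑ S ∈ lagT n v, sgn (extv f S v) = N * Av f v := by
    intro v hv
    rw [Av, hlag v hv, ← hN]
    field_simp
  have hEb : ∑ v ∈ nz n, (Av f v) ^ 2 = M * Eb f := by
    rw [Eb, ← hM]; field_simp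
  have f1 : ∀ i, ∑ σ : SpG n, sgn (extv f (actS σ.1 (x i)) (σ.1 v0)) * Av f (σ.1 v0) = G * Eb f := by
    intro i
    have h := flag_average (fun p => sgn (extv f p.2 p.1) * Av f p.1) (v0, x i) (hx i)
    rw [hflags, sum_flags] at h
    have e : ∑ v ∈ nz n, ∑ S ∈ lagT n v, sgn (extv f S v) * Av f v = N * (M * Eb f) := by
      rw [← hEb, Finset.mul_sum]
      refine Finset.sum_congr rfl fun v hv => ?_
      rw [← Finset.sum_mul, hAN v ((mem_nz v).1 hv)]; ring
    simp only [] at h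
    rw [e] at h
    simp only [actF] at h
    have hMN : M * N ≠ 0 := (mul_pos hMpos hNpos).ne'
    apply mul_left_cancel₀ hMN
    rw [h]; ring
  have f2 : ∑ σ : SpG n, (Av f (σ.1 v0)) ^ 2 = G * Eb f := by
    have h := flag_average (fun p => (Av f p.1) ^ 2) (v0, x i0) (hx i0)
    rw [hflags, sum_flags] at h
    have e : ∑ v ∈ nz n, ∑ S ∈ lagT n v, (Av f v) ^ 2 = N * (M * Eb f) := by
      rw [← hEb, Finset.mul_sum]
      refine Finset.sum_congr rfl fun v hv => ?_
      rw [Finset.sum_const, nsmul_eq_mul, hlag v ((mem_nz v).1 hv)]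
    simp only [] at h
    rw [e] at h
    simp only [actF] at h
    have hMN : M * N ≠ 0 := (mul_pos hMpos hNpos).ne'
    apply mul_left_cancel₀ hMN
    rw [h]; ring
  set k : ℝ := (Fintype.card ι : ℝ) with hk
  have hpt : ∀ σ : SpG n, 2 * k * ((∑ i, sgn (extv f (actS σ.1 (x i)) (σ.1 v0))) * Av f (σ.1 v0))
      - k ^ 2 * (Av f (σ.1 v0)) ^ 2 ≤ (∑ i, sgn (extv f (actS σ.1 (x i)) (σ.1 v0))) ^ 2 := by
    intro σ
    nlinarith [sq_nonneg ((∑ i, sgn (extv f (actS σ.1 (x i)) (σ.1 v0))) - k * Av f (σ.1 v0))]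
  refine le_trans (le_of_eq ?_) (Finset.sum_le_sum fun σ _ => hpt σ)
  rw [Finset.sum_sub_distrib, ← Finset.mul_sum, ← Finset.mul_sum, f2]
  simp only [Finset.sum_mul]
  rw [Finset.sum_comm]
  simp only [f1]
  rw [Finset.sum_const, nsmul_eq_mul, Finset.card_univ, ← hk]
  ring

lemma cell_ne : ∀ i j, cell i j ≠ 0 := by decide

lemma wvm_zero {m : ℕ} (z : Fin m → ZZ) (h : wvm z = 0) (k : Fin m) : (z k).1 = true := by
  have h1 : blk (wvm z) k = 0 := by rw [h, blk_zero]
  rw [wvm, blk_asm] at h1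
  by_contra hk
  simp only [wv] at h1
  rw [if_neg hk] at h1
  exact cell_ne _ _ h1

open Classical in
lemma zs_card {m : ℕ} (hm : 1 ≤ m) :
    (18 : ℝ) ^ m ≤ 2 * ((Finset.univ.filter fun z : Fin m → ZZ => wvm z ≠ 0).card : ℝ) := by
  have h1 : (Finset.univ.filter fun z : Fin m → ZZ => wvm z = 0).card ≤ 9 ^ m := by
    have hsub : (Finset.univ.filter fun z : Fin m → ZZ => wvm z = 0) ⊆
        Fintype.piFinset (fun _ => Finset.univ.filter fun z : ZZ => z.1 = true) := by
      intro z hz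
      rw [Fintype.mem_piFinset]
      intro k
      exact Finset.mem_filter.2
        ⟨Finset.mem_univ _, wvm_zero z (Finset.mem_filter.1 hz).2 k⟩
    refine (Finset.card_le_card hsub).trans (le_of_eq ?_)
    rw [Fintype.card_piFinset, Finset.prod_const, Finset.card_univ, Fintype.card_fin]
    congr 1
  have h2 := Finset.card_filter_add_card_filter_not (s := (Finset.univ : Finset (Fin m → ZZ)))
    (fun z => wvm z = 0)
  have h3 : (Finset.univ : Finset (Fin m → ZZ)).card = 18 ^ m := by
    rw [Finset.card_univ, Fintype.card_fun, Fintype.card_fin]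
    congr 1
  rw [h3] at h2
  have h4 : 2 * 9 ^ m ≤ 18 ^ m := by
    rw [show 18 = 2 * 9 by norm_num, mul_pow]
    exact Nat.mul_le_mul_right _ (by
      calc 2 = 2 ^ 1 := by norm_num
        _ ≤ 2 ^ m := Nat.pow_le_pow_right (by norm_num) hm)
  have h5 : 18 ^ m ≤ 2 * (Finset.univ.filter fun z : Fin m → ZZ => wvm z ≠ 0).card := by
    simp only [ne_eq]
    omega
  exact_mod_cast h5

lemma Eb_nonneg {n : ℕ} (f : (S : Submodule F2 (PV n)) → (S → F2)) : 0 ≤ Eb f := by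
  rw [Eb]
  exact mul_nonneg (by positivity) (Finset.sum_nonneg fun _ _ => sq_nonneg _)

lemma Eb_bound {m : ℕ} (hm : 1 ≤ m)
    (f : (S : Submodule F2 (PV (m * 2))) → (S → F2))
    (hf : ∀ S ∈ Lset (m * 2) (m * 2), IsOutcome S (f S)) (ε : ℝ) (hε0 : 0 ≤ ε)
    (hε : ε ^ 18 = 1 - 1 / (18 * 6 ^ 6)) : Eb f ≤ 2 * ε ^ (m * 2) := by
  classical
  let Zs := Finset.univ.filter fun z : Fin m → ZZ => wvm z ≠ 0
  let T : SpG (m * 2) → (Fin m → ZZ) → ℝ := fun σ z =>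
    (∑ a : Fin m → UU, sgn (extv f (actS σ.1 (ctx (alfm z a))) (σ.1 (wvm z)))) ^ 2
  set G : ℝ := (Fintype.card (SpG (m * 2)) : ℝ) with hG
  have hGpos : 0 < G := by
    have : 0 < Fintype.card (SpG (m * 2)) := Fintype.card_pos
    rw [hG]; exact Nat.cast_pos.2 this
  have hcard : (Fintype.card (Fin m → UU) : ℝ) ^ 2 = 36 ^ m := by
    rw [Fintype.card_fun, Fintype.card_fin]
    simp only [UU, Fintype.card_prod, Fintype.card_bool, Fintype.card_fin]
    push_cast
    rw [← pow_mul, mul_comm m 2, pow_mul]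
    norm_num
  have low : ∀ z ∈ Zs, G * 36 ^ m * Eb f ≤ ∑ σ, T σ z := by
    intro z hz
    have hz' : wvm z ≠ 0 := (Finset.mem_filter.1 hz).2
    have h := cs_bound f (wvm z) (fun a : Fin m → UU => ctx (alfm z a))
      (fun a => (mem_flags _).2 ⟨hz', ctx_lag _, wvm_mem z a⟩)
    rw [hcard] at h
    exact h
  have up : ∀ σ : SpG (m * 2), ∑ z, T σ z ≤ 648 ^ m * ε ^ (m * 2) := by
    intro σ
    refine one_structure (fun c w => extv f (actS σ.1 (ctx c)) (σ.1 w)) σ ?_ ε hε0 hε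
    intro c w hw w' hw'
    have h1 := (mem_actS σ.1 (ctx c) w).2 hw
    have h2 := (mem_actS σ.1 (ctx c) w').2 hw'
    have h3 := (mem_actS σ.1 (ctx c) (w + w')).2 (add_mem hw hw')
    have ho := hf _ (actS_lag σ.1 σ.2 _ (ctx_lag c)) ⟨_, h1⟩ ⟨_, h2⟩
    simp only [extv]
    rw [dif_pos h1, dif_pos h2, dif_pos h3, ← ho]
    congr 1
    exact Subtype.ext (map_add _ _ _)
  have hTnn : ∀ σ z, 0 ≤ T σ z := fun σ z => sq_nonneg _
  have main : (Zs.card : ℝ) * (G * 36 ^ m * Eb f) ≤ G * (648 ^ m * ε ^ (m * 2)) := by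
    calc (Zs.card : ℝ) * (G * 36 ^ m * Eb f) = ∑ z ∈ Zs, G * 36 ^ m * Eb f := by
          rw [Finset.sum_const, nsmul_eq_mul]
      _ ≤ ∑ z ∈ Zs, ∑ σ, T σ z := Finset.sum_le_sum low
      _ ≤ ∑ z, ∑ σ, T σ z := Finset.sum_le_sum_of_subset_of_nonneg (Finset.subset_univ _)
          (fun z _ _ => Finset.sum_nonneg fun σ _ => hTnn σ z)
      _ = ∑ σ, ∑ z, T σ z := Finset.sum_comm
      _ ≤ ∑ _σ : SpG (m * 2), 648 ^ m * ε ^ (m * 2) := Finset.sum_le_sum fun σ _ => up σ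
      _ = _ := by rw [Finset.sum_const, nsmul_eq_mul, Finset.card_univ]
  have hz := zs_card hm
  have hE := Eb_nonneg f
  have h36 : (0 : ℝ) < G * 36 ^ m := by positivity
  have m2 : (18 : ℝ) ^ m * (G * 36 ^ m * Eb f) ≤ 2 * (G * (648 ^ m * ε ^ (m * 2))) := by
    calc (18 : ℝ) ^ m * (G * 36 ^ m * Eb f) ≤ 2 * (Zs.card : ℝ) * (G * 36 ^ m * Eb f) :=
          mul_le_mul_of_nonneg_right hz (by positivity)
      _ = 2 * ((Zs.card : ℝ) * (G * 36 ^ m * Eb f)) := by ring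
      _ ≤ _ := by linarith
  have h648 : (648 : ℝ) ^ m = 18 ^ m * 36 ^ m := by rw [← mul_pow]; norm_num
  rw [h648] at m2
  have hc : (0 : ℝ) < G * (18 ^ m * 36 ^ m) := by positivity
  refine le_of_mul_le_mul_left ?_ hc
  linarith

lemma lagT_pos {m : ℕ} (hm : 1 ≤ m) (v : PV (m * 2)) (hv : v ≠ 0) :
    0 < (lagT (m * 2) v).card := by
  let z : Fin m → ZZ := fun _ => (false, 0, 0)
  have hz : wvm z ≠ 0 := fun h => by
    have := wvm_zero z h ⟨0, hm⟩
    exact absurd this (by simp [z])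
  rw [lagT_card v (wvm z) hv hz]
  exact Finset.card_pos.2 ⟨ctx (alfm z fun _ => (true, 0)),
    (mem_lagT _ _).2 ⟨ctx_lag _, wvm_mem z _⟩⟩

lemma nz_pos {m : ℕ} (hm : 1 ≤ m) : 0 < (nz (m * 2)).card := by
  let z : Fin m → ZZ := fun _ => (false, 0, 0)
  have hz : wvm z ≠ 0 := fun h => by
    have := wvm_zero z h ⟨0, hm⟩
    exact absurd this (by simp [z])
  exact Finset.card_pos.2 ⟨wvm z, (mem_nz _).2 hz⟩

lemma agreeProb_le {m : ℕ} (hm : 1 ≤ m) (f g : (S : Submodule F2 (PV (m * 2))) → (S → F2)) :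
    agreeProb (m * 2) f g ≤ 1 / 2 + (Eb f + Eb g) / 4 := by
  have hM : (0 : ℝ) < ((nz (m * 2)).card : ℝ) := by exact_mod_cast nz_pos hm
  rw [agreeProb_eq (lagT_pos hm), Eb, Eb]
  have h : ∑ v ∈ nz (m * 2), (1 + Av f v * Av g v) / 2 ≤
      ∑ v ∈ nz (m * 2), (1 / 2 + ((Av f v) ^ 2 + (Av g v) ^ 2) / 4) :=
    Finset.sum_le_sum fun v _ => by nlinarith [sq_nonneg (Av f v - Av g v)]
  refine (mul_le_mul_of_nonneg_left h (by positivity)).trans (le_of_eq ?_)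
  rw [Finset.sum_add_distrib, Finset.sum_const, ← Finset.sum_div, Finset.sum_add_distrib,
    nsmul_eq_mul]
  field_simp

lemma agreeProb_self {m : ℕ} (hm : 1 ≤ m) (f : (S : Submodule F2 (PV (m * 2))) → (S → F2)) :
    1 / 2 ≤ agreeProb (m * 2) f f := by
  have hM : (0 : ℝ) < ((nz (m * 2)).card : ℝ) := by exact_mod_cast nz_pos hm
  rw [agreeProb_eq (lagT_pos hm)]
  have h : ∑ v ∈ nz (m * 2), (1 / 2 : ℝ) ≤ ∑ v ∈ nz (m * 2), (1 + Av f v * Av f v) / 2 :=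
    Finset.sum_le_sum fun v _ => by nlinarith [sq_nonneg (Av f v)]
  refine le_trans (le_of_eq ?_) (mul_le_mul_of_nonneg_left h (by positivity))
  rw [Finset.sum_const, nsmul_eq_mul]
  field_simp


/-- **Pauli agreement game.** There is `ε ∈ (0,1)` such that for every even `n ≥ 2`, the
maximum of `P(f,g)` over all pairs of outcome families lies between `1/2` and `1/2 + ε^n`. -/
theorem pauli_agreement_game_value :
    ∃ ε : ℝ, ε ∈ Set.Ioo (0 : ℝ) 1 ∧ ∀ n : ℕ, Even n → 2 ≤ n →
      (∃ f g : (S : Submodule F2 (PV n)) → (S → F2),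
          (∀ S ∈ Lset n n, IsOutcome S (f S)) ∧
          (∀ S ∈ Lset n n, IsOutcome S (g S)) ∧
          (1 / 2 : ℝ) ≤ agreeProb n f g) ∧
      (∀ f g : (S : Submodule F2 (PV n)) → (S → F2),
          (∀ S ∈ Lset n n, IsOutcome S (f S)) →
          (∀ S ∈ Lset n n, IsOutcome S (g S)) →
          agreeProb n f g ≤ 1 / 2 + ε ^ n) := by
  have hb0 : (0 : ℝ) < 1 - 1 / (18 * 6 ^ 6) := by norm_num
  have hb1 : (1 : ℝ) - 1 / (18 * 6 ^ 6) < 1 := by norm_num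
  obtain ⟨ε, he0, he1, hpow⟩ : ∃ ε : ℝ, 0 < ε ∧ ε < 1 ∧ ε ^ 18 = 1 - 1 / (18 * 6 ^ 6) :=
    ⟨(1 - 1 / (18 * 6 ^ 6) : ℝ) ^ (((18 : ℕ) : ℝ)⁻¹), Real.rpow_pos_of_pos hb0 _,
      Real.rpow_lt_one hb0.le hb1 (by positivity), Real.rpow_inv_natCast_pow hb0.le (by norm_num)⟩
  refine ⟨ε, ⟨he0, he1⟩, fun n hn hn2 => ?_⟩
  obtain ⟨m, rfl⟩ : ∃ m, n = m * 2 := by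
    obtain ⟨r, hr⟩ := hn
    exact ⟨r, by omega⟩
  have hm : 1 ≤ m := by omega
  constructor
  · classical
    let f : (S : Submodule F2 (PV (m * 2))) → (S → F2) := fun S =>
      if h : IsIsotropic S then (exists_outcome S h).choose else fun _ => 0
    have hf : ∀ S ∈ Lset (m * 2) (m * 2), IsOutcome S (f S) := by
      intro S hS
      simp only [f]
      rw [dif_pos hS.1]
      exact (exists_outcome S hS.1).choose_spec
    exact ⟨f, f, hf, hf, agreeProb_self hm f⟩
  · intro f g hf hg
    have h1 := agreeProb_le hm f g
    have h2 := Eb_bound hm f hf ε he0.le hpow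
    have h3 := Eb_bound hm g hg ε he0.le hpow
    linarith
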